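/- Let X ∈ ES and let γ ∨ (⋀_{i∈NI}⟨A_i⟩φ_i → ⋁_{j∈PI}⟨B_j⟩ψ_j) be a standard disjunction. If the X-derivability-reduction-condition holds — namely (1) ⊢_XL γ, or (2) both: (a) if D ∉ X, then there are NI' ⊆ NI and j ∈ PI such that NI' is X-neat, ⋃_{i∈NI'} A_i ⊆ B_j, and ⊢_XL ⋀_{i∈NI'}φ_i → ψ_j; and (b) if D ∈ X, then there are NI' ⊆ NI and j ∈ PI such that NI' is X-neat, ⋃_{i∈NI'} A_i ⊆ B_j, and ⊢_XL ⋀_{i∈NI'}φ_i → (ψ_j ∨ ⋁_{k∈PI₀}ψ_k), where PI₀ = { j ∈ PI : B_j = AG } — then ⊢_XL γ ∨ (⋀_{i∈NI}⟨A_i⟩φ_i → ⋁_{j∈PI}⟨B_j⟩ψ_j). -/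

import Mathlib

/-!
The implication `⟨∅⟩φ ∧ ⟨C⟩ψ → ⟨C⟩(φ ∧ ψ)` is derivable in every XL: monotonicity turns `⟨∅⟩φ` into
`⟨∅⟩(ψ → φ ∧ ψ)`, to which A-MG applies. Without `I`, neatness allows at most one nonempty
coalition, so this implication replaces A-IA, and in every system the premises indexed by a neat
`NI'` merge into `⟨⋃ A_i⟩ ⋀ φ_i`. The merging starts from `⟨∅⟩⊤`, which A-Ser provides if `S ∈ X`;
otherwise `NI'` is nonempty and any of its premises yields `⟨∅⟩⊤` by conditional necessitation.
Monotonicity then gives `⟨B_j⟩ψ_j`, or, if `D ∈ X`, `⟨B_j⟩(ψ_j ∨ ⋁_{k ∈ PI₀} ψ_k)`, which A-Det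
breaks up into `⟨B_j⟩ψ_j` and the `⟨AG⟩ψ_k`.
-/

namespace CL

/-- The language Φ of coalition logic over a set of agents, with atomic
propositions drawn from ℕ (a countable set). -/
inductive Formula (Agent : Type) : Type
  | top : Formula Agent
  | atom : ℕ → Formula Agent
  | neg : Formula Agent → Formula Agent
  | and : Formula Agent → Formula Agent → Formula Agent
  | coal : Set Agent → Formula Agent → Formula Agent

namespace Formula

variable {Agent : Type}

def bot : Formula Agent := neg top

def or (φ ψ : Formula Agent) : Formula Agent := neg (and (neg φ) (neg ψ))

def imp (φ ψ : Formula Agent) : Formula Agent := or (neg φ) ψ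

def iff (φ ψ : Formula Agent) : Formula Agent := and (imp φ ψ) (imp ψ φ)

end Formula

/-- The three frame properties: seriality, independence of agents, determinism.
`ES` is represented by `Set P3`, the eight subsets of {S, I, D}. -/
inductive P3 : Type
  | S | I | D
deriving DecidableEq
/-- Propositional evaluation of a formula, treating coalition formulas and
atoms as propositional atoms (valued by `v`). -/
def Formula.evalProp {Agent : Type} (v : Formula Agent → Bool) : Formula Agent → Bool
  | .top => true
  | .atom n => v (.atom n)
  | .neg φ => !(φ.evalProp v)
  | .and φ ψ => φ.evalProp v && ψ.evalProp v
  | .coal C φ => v (.coal C φ)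

/-- A propositional tautology. -/
def Tautology {Agent : Type} (φ : Formula Agent) : Prop :=
  ∀ v : Formula Agent → Bool, φ.evalProp v = true

/-- Derivability in the axiomatic system XL, for X ∈ ES (X : Set P3).
MCL is the case X = ∅ and CL is the case X = {S, I, D}. -/
inductive Deriv {Agent : Type} (X : Set P3) : Formula Agent → Prop
  | taut {φ : Formula Agent} : Tautology φ → Deriv X φ
  | naaa (C : Set Agent) : Deriv X (Formula.neg (Formula.coal C Formula.bot))
  | mg (C : Set Agent) (φ ψ : Formula Agent) :
      Deriv X ((Formula.coal ∅ (φ.imp ψ)).imp ((Formula.coal C φ).imp (Formula.coal C ψ)))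
  | mc {C D : Set Agent} (h : C ⊆ D) (φ : Formula Agent) :
      Deriv X ((Formula.coal C φ).imp (Formula.coal D φ))
  | ser (h : P3.S ∈ X) (C : Set Agent) : Deriv X (Formula.coal C Formula.top)
  | ia (h : P3.I ∈ X) {C D : Set Agent} (hCD : C ∩ D = ∅) (φ ψ : Formula Agent) :
      Deriv X (((Formula.coal C φ).and (Formula.coal D ψ)).imp
        (Formula.coal (C ∪ D) (φ.and ψ)))
  | det (h : P3.D ∈ X) (C : Set Agent) (φ ψ : Formula Agent) :
      Deriv X ((Formula.coal C (φ.or ψ)).imp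
        ((Formula.coal C φ).or (Formula.coal Set.univ ψ)))
  | mp {φ ψ : Formula Agent} : Deriv X (φ.imp ψ) → Deriv X φ → Deriv X ψ
  | cn {φ : Formula Agent} (C : Set Agent) (ψ : Formula Agent) :
      Deriv X φ → Deriv X ((Formula.coal C ψ).imp (Formula.coal ∅ φ))
def bigConj {Agent : Type} (l : List (Formula Agent)) : Formula Agent :=
  l.foldr Formula.and Formula.top

def bigDisj {Agent : Type} (l : List (Formula Agent)) : Formula Agent :=
  l.foldr Formula.or Formula.bot

inductive IsLiteral {Agent : Type} : Formula Agent → Prop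
  | pos (n : ℕ) : IsLiteral (Formula.atom n)
  | neg (n : ℕ) : IsLiteral (Formula.neg (Formula.atom n))

/-- An elementary disjunction: a disjunction of propositional literals. -/
inductive IsElemDisj {Agent : Type} : Formula Agent → Prop
  | lit {φ : Formula Agent} : IsLiteral φ → IsElemDisj φ
  | or {φ ψ : Formula Agent} : IsElemDisj φ → IsElemDisj ψ → IsElemDisj (φ.or ψ)

/-- An elementary conjunction: a conjunction of propositional literals. -/
inductive IsElemConj {Agent : Type} : Formula Agent → Prop
  | lit {φ : Formula Agent} : IsLiteral φ → IsElemConj φ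
  | and {φ ψ : Formula Agent} : IsElemConj φ → IsElemConj ψ → IsElemConj (φ.and ψ)

/-- The data of a standard disjunction γ ∨ (⋀_{i∈NI}⟨A_i⟩φ_i → ⋁_{j∈PI}⟨B_j⟩ψ_j):
NI is represented by `Fin n` (possibly empty) and PI by `Fin (m+1)` (nonempty);
(1) if NI ≠ ∅ then ⟨A_i⟩φ_i = ⟨∅⟩⊤ for some i ∈ NI, and (2) ⟨B_0⟩ψ_0 = ⟨AG⟩⊥. -/
structure StdDisj (Agent : Type) where
  γ : Formula Agent
  hγ : IsElemDisj γ
  n : ℕ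
  m : ℕ
  A : Fin n → Set Agent
  φ : Fin n → Formula Agent
  B : Fin (m + 1) → Set Agent
  ψ : Fin (m + 1) → Formula Agent
  hNI : n ≠ 0 → ∃ i : Fin n, A i = ∅ ∧ φ i = Formula.top
  hB0 : B 0 = Set.univ
  hψ0 : ψ 0 = Formula.bot

namespace StdDisj

variable {Agent : Type} (d : StdDisj Agent)

/-- The formula γ ∨ (⋀_{i∈NI}⟨A_i⟩φ_i → ⋁_{j∈PI}⟨B_j⟩ψ_j). -/
def toFormula : Formula Agent :=
  d.γ.or
    ((bigConj ((List.finRange d.n).map fun i => Formula.coal (d.A i) (d.φ i))).imp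
      (bigDisj ((List.finRange (d.m + 1)).map fun j => Formula.coal (d.B j) (d.ψ j))))

/-- N ⊆ NI is X-neat. -/
def Neat (X : Set P3) (N : Finset (Fin d.n)) : Prop :=
  (∀ i ∈ N, ∀ i' ∈ N, i ≠ i' → d.A i ∩ d.A i' = ∅) ∧
    (P3.S ∉ X → N.Nonempty) ∧
    (P3.I ∉ X → ∀ i ∈ N, ∀ i' ∈ N, d.A i ≠ ∅ → d.A i' ≠ ∅ → i = i')

/-- The set of basic positive indices `PI₀ = { j ∈ PI : B_j = AG }`. -/
noncomputable def PI0 : Finset (Fin (d.m + 1)) :=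
  letI := Classical.decPred fun j : Fin (d.m + 1) => d.B j = Set.univ
  Finset.univ.filter fun j => d.B j = Set.univ

end StdDisj

namespace Formula

variable {Agent : Type} (v : Formula Agent → Bool) (φ ψ : Formula Agent)

theorem evalProp_neg : φ.neg.evalProp v = !φ.evalProp v := rfl

theorem evalProp_and : (φ.and ψ).evalProp v = (φ.evalProp v && ψ.evalProp v) := rfl

theorem evalProp_or : (φ.or ψ).evalProp v = (φ.evalProp v || ψ.evalProp v) := by
  simp [Formula.or, evalProp_neg, evalProp_and]

theorem evalProp_imp : (φ.imp ψ).evalProp v = (!φ.evalProp v || ψ.evalProp v) := by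
  simp [Formula.imp, evalProp_or, evalProp_neg]

end Formula

/-- Provable implication `⊢_XL φ → ψ`, as a relation on formulas so that derivations can be
chained. -/
def Entails {Agent : Type} (X : Set P3) (φ ψ : Formula Agent) : Prop :=
  Deriv X (φ.imp ψ)

local notation:50 φ:51 " ⊢[" X "] " ψ:51 => Entails X φ ψ

namespace Entails

open Formula

variable {Agent : Type} {X : Set P3} {φ ψ χ θ : Formula Agent}

theorem of_evalProp (h : ∀ v, φ.evalProp v = true → ψ.evalProp v = true) : φ ⊢[X] ψ :=
  .taut fun v => by grind [evalProp_imp]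

theorem of_deriv (h : Deriv X ψ) : φ ⊢[X] ψ :=
  Deriv.mp (.taut fun v => by grind [evalProp_imp]) h

theorem imp_mp (hφψ : θ ⊢[X] φ.imp ψ) (hφ : θ ⊢[X] φ) : θ ⊢[X] ψ :=
  Deriv.mp (Deriv.mp (.taut fun v => by grind [evalProp_imp]) hφψ) hφ

protected theorem trans (hφψ : φ ⊢[X] ψ) (hψχ : ψ ⊢[X] χ) : φ ⊢[X] χ :=
  imp_mp (of_deriv hψχ) hφψ

instance : Trans (Entails (Agent := Agent) X) (Entails X) (Entails X) := ⟨Entails.trans⟩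

protected theorem refl (φ : Formula Agent) : φ ⊢[X] φ :=
  of_evalProp fun _ => id

theorem and_left : φ.and ψ ⊢[X] φ :=
  of_evalProp fun v => by grind [evalProp_and]

theorem and_right : φ.and ψ ⊢[X] ψ :=
  of_evalProp fun v => by grind [evalProp_and]

theorem and_intro (hφ : θ ⊢[X] φ) (hψ : θ ⊢[X] ψ) : θ ⊢[X] φ.and ψ :=
  Deriv.mp (Deriv.mp (.taut fun v => by grind [evalProp_imp, evalProp_and]) hφ) hψ

theorem and_comm : φ.and ψ ⊢[X] ψ.and φ :=
  and_intro and_right and_left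

theorem or_inl : φ ⊢[X] φ.or ψ :=
  of_evalProp fun v => by grind [evalProp_or]

theorem or_inr : ψ ⊢[X] φ.or ψ :=
  of_evalProp fun v => by grind [evalProp_or]

theorem or_elim (hφ : φ ⊢[X] θ) (hψ : ψ ⊢[X] θ) : φ.or ψ ⊢[X] θ :=
  Deriv.mp (Deriv.mp (.taut fun v => by grind [evalProp_imp, evalProp_or]) hφ) hψ

theorem of_neg (h : Deriv X φ.neg) : φ ⊢[X] ψ :=
  Deriv.mp (.taut fun v => by grind [evalProp_imp, evalProp_neg]) h

theorem bigConj_of_mem {l : List (Formula Agent)} (h : φ ∈ l) : bigConj l ⊢[X] φ := by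
  induction h with
  | head => exact and_left
  | tail _ _ ih => exact and_right.trans ih

theorem bigDisj_of_mem {l : List (Formula Agent)} (h : φ ∈ l) : φ ⊢[X] bigDisj l := by
  induction h with
  | head => exact or_inl
  | tail _ _ ih => exact ih.trans or_inr

theorem coal_mono_left {C D : Set Agent} (h : C ⊆ D) : coal C φ ⊢[X] coal D φ :=
  .mc h φ

/-- `⟨C⟩φ` is itself the condition under which conditional necessitation yields `⟨∅⟩(φ → ψ)`. -/
theorem coal_mono_right (C : Set Agent) (h : φ ⊢[X] ψ) : coal C φ ⊢[X] coal C ψ :=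
  imp_mp (.trans (.cn C φ h) (.mg C φ ψ)) (.refl _)

theorem coal_empty_and_coal (C : Set Agent) :
    (coal ∅ φ).and (coal C ψ) ⊢[X] coal C (φ.and ψ) := by
  have pairing : φ ⊢[X] ψ.imp (φ.and ψ) :=
    of_evalProp fun v => by grind [evalProp_imp, evalProp_and]
  have himp := calc
    (coal ∅ φ).and (coal C ψ) ⊢[X] coal ∅ φ := and_left
    _ ⊢[X] coal ∅ (ψ.imp (φ.and ψ)) := coal_mono_right ∅ pairing
    _ ⊢[X] (coal C ψ).imp (coal C (φ.and ψ)) := .mg C ψ _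
  exact imp_mp himp and_right

theorem coal_and_coal_empty (C : Set Agent) :
    (coal C φ).and (coal ∅ ψ) ⊢[X] coal C (φ.and ψ) :=
  and_comm.trans ((coal_empty_and_coal C).trans (coal_mono_right C and_comm))

/-- A-Det distributes `⟨AG⟩` over disjunctions; A-NAAA disposes of the empty one. -/
theorem coal_univ_bigDisj_elim (hD : P3.D ∈ X) {l : List (Formula Agent)}
    (h : ∀ φ ∈ l, coal Set.univ φ ⊢[X] θ) : coal Set.univ (bigDisj l) ⊢[X] θ := by
  induction l with
  | nil => exact of_neg (.naaa Set.univ)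
  | cons φ l ih =>
    have ⟨hφ, hl⟩ := List.forall_mem_cons.1 h
    exact .trans (.det hD Set.univ φ (bigDisj l)) (or_elim hφ (ih hl))

end Entails

/-- The condition that `X`-neatness imposes on two coalitions with distinct indices; it allows their
goals to be conjoined in XL, see `Mergeable.coal_and_coal`. -/
def Mergeable {Agent : Type} (X : Set P3) (C D : Set Agent) : Prop :=
  Disjoint C D ∧ (P3.I ∉ X → C = ∅ ∨ D = ∅)

/-- `X`-neatness of a finite set of indices of a family of coalitions; `StdDisj.neat_iff` relates it
to the definition for standard disjunctions. -/
def IsNeat {Agent : Type} {ι : Type*} (X : Set P3) (A : ι → Set Agent) (N : Finset ι) : Prop :=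
  (N : Set ι).Pairwise (Function.onFun (Mergeable X) A) ∧ (P3.S ∉ X → N.Nonempty)

section Merging

open Formula Entails

variable {Agent : Type} {ι : Type*} {X : Set P3} {θ ψ χ : Formula Agent}
  {A : ι → Set Agent} {φ : ι → Formula Agent}

theorem Mergeable.coal_and_coal {C D : Set Agent} (h : Mergeable X C D) :
    (coal C ψ).and (coal D χ) ⊢[X] coal (C ∪ D) (ψ.and χ) := by
  by_cases hI : P3.I ∈ X
  · exact .ia hI h.1.inter_eq ψ χ
  · rcases h.2 hI with rfl | rfl
    · simpa only [Set.empty_union] using coal_empty_and_coal D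
    · simpa only [Set.union_empty] using coal_and_coal_empty C

theorem Mergeable.biUnion_right {C : Set Agent} {s : Set ι} (h : ∀ i ∈ s, Mergeable X C (A i)) :
    Mergeable X C (⋃ i ∈ s, A i) := by
  refine ⟨Set.disjoint_iUnion₂_right.2 fun i hi => (h i hi).1, fun hI => ?_⟩
  refine or_iff_not_imp_left.2 fun hC => ?_
  simpa only [Set.iUnion_eq_empty] using fun i hi => ((h i hi).2 hI).resolve_left hC

theorem entails_coal_biUnion_bigConj (hθ : θ ⊢[X] coal ∅ top) {l : List ι}
    (hl : l.Pairwise (Function.onFun (Mergeable X) A)) (h : ∀ i ∈ l, θ ⊢[X] coal (A i) (φ i)) :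
    θ ⊢[X] coal (⋃ i ∈ l, A i) (bigConj (l.map φ)) := by
  induction l with
  | nil => simpa [bigConj] using hθ
  | cons i l ih =>
    have ⟨hi, hl⟩ := List.pairwise_cons.1 hl
    have ⟨hhead, htail⟩ := List.forall_mem_cons.1 h
    have hunion : ⋃ k ∈ i :: l, A k = A i ∪ ⋃ k ∈ l, A k := by ext; simp
    rw [hunion]
    exact .trans (and_intro hhead (ih hl htail)) (Mergeable.biUnion_right hi).coal_and_coal

theorem IsNeat.entails_coal_empty_top {N : Finset ι} (hN : IsNeat X A N)
    (h : ∀ i ∈ N, θ ⊢[X] coal (A i) (φ i)) : θ ⊢[X] coal ∅ top := by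
  by_cases hS : P3.S ∈ X
  · exact of_deriv (.ser hS ∅)
  · obtain ⟨i, hi⟩ := hN.2 hS
    exact (h i hi).trans (.cn _ _ (.taut fun _ => rfl))

theorem IsNeat.entails_coal {N : Finset ι} (hN : IsNeat X A N)
    (h : ∀ i ∈ N, θ ⊢[X] coal (A i) (φ i)) {C : Set Agent} (hC : ⋃ i ∈ N, A i ⊆ C)
    (hχ : bigConj (N.toList.map φ) ⊢[X] χ) : θ ⊢[X] coal C χ := by
  have hpairwise : N.toList.Pairwise (Function.onFun (Mergeable X) A) :=
    N.nodup_toList.imp_of_mem fun hi hk => hN.1 (Finset.mem_toList.1 hi) (Finset.mem_toList.1 hk)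
  have hunion : ⋃ i ∈ N.toList, A i ⊆ C := by simpa only [Finset.mem_toList] using hC
  calc
    θ ⊢[X] coal (⋃ i ∈ N.toList, A i) (bigConj (N.toList.map φ)) :=
      entails_coal_biUnion_bigConj (hN.entails_coal_empty_top h) hpairwise
        fun i hi => h i (Finset.mem_toList.1 hi)
    _ ⊢[X] coal C (bigConj (N.toList.map φ)) := coal_mono_left hunion
    _ ⊢[X] coal C χ := coal_mono_right C hχ

theorem StdDisj.neat_iff (d : StdDisj Agent) {N : Finset (Fin d.n)} :
    d.Neat X N ↔ IsNeat X d.A N := by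
  simp only [Neat, IsNeat, Mergeable, Set.Pairwise, Function.onFun, Finset.mem_coe,
    Set.disjoint_iff_inter_eq_empty]
  grind

end Merging

theorem upward_derivability_general {Agent : Type} (X : Set P3) {n m : ℕ} (γ : Formula Agent)
    (A : Fin n → Set Agent) (φ : Fin n → Formula Agent)
    (B : Fin m → Set Agent) (ψ : Fin m → Formula Agent)
    (P : Finset (Fin m)) (hP : ∀ k ∈ P, B k = Set.univ)
    (h : Deriv X γ ∨
      ((P3.D ∉ X → ∃ (N : Finset (Fin n)) (j : Fin m),
          IsNeat X A N ∧ (⋃ i ∈ N, A i) ⊆ B j ∧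
          Deriv X ((bigConj (N.toList.map φ)).imp (ψ j))) ∧
        (P3.D ∈ X → ∃ (N : Finset (Fin n)) (j : Fin m),
          IsNeat X A N ∧ (⋃ i ∈ N, A i) ⊆ B j ∧
          Deriv X ((bigConj (N.toList.map φ)).imp
            ((ψ j).or (bigDisj (P.toList.map ψ))))))) :
    Deriv X (γ.or
      ((bigConj ((List.finRange n).map fun i => Formula.coal (A i) (φ i))).imp
        (bigDisj ((List.finRange m).map fun j => Formula.coal (B j) (ψ j))))) := by
  rcases h with hγ | ⟨hnondet, hdet⟩
  · exact .mp Entails.or_inl hγ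
  refine .mp Entails.or_inr ?_
  set Φ := bigConj ((List.finRange n).map fun i => Formula.coal (A i) (φ i))
  set Ψ := bigDisj ((List.finRange m).map fun j => Formula.coal (B j) (ψ j))
  have premise i : Φ ⊢[X] .coal (A i) (φ i) :=
    .bigConj_of_mem (List.mem_map_of_mem (List.mem_finRange i))
  have conclusion j : .coal (B j) (ψ j) ⊢[X] Ψ :=
    .bigDisj_of_mem (List.mem_map_of_mem (List.mem_finRange j))
  by_cases hD : P3.D ∈ X
  · obtain ⟨N, j, hN, hNB, hχ⟩ := hdet hD
    have grand : .coal .univ (bigDisj (P.toList.map ψ)) ⊢[X] Ψ :=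
      .coal_univ_bigDisj_elim hD <| List.forall_mem_map.2 fun k hk =>
        hP k (Finset.mem_toList.1 hk) ▸ conclusion k
    calc
      Φ ⊢[X] .coal (B j) ((ψ j).or (bigDisj (P.toList.map ψ))) :=
        hN.entails_coal (fun i _ => premise i) hNB hχ
      _ ⊢[X] (Formula.coal (B j) (ψ j)).or (.coal .univ (bigDisj (P.toList.map ψ))) :=
        .det hD _ _ _
      _ ⊢[X] Ψ := .or_elim (conclusion j) grand
  · obtain ⟨N, j, hN, hNB, hχ⟩ := hnondet hD
    exact (hN.entails_coal (fun i _ => premise i) hNB hχ).trans (conclusion j)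

/-- Upward derivability lemma: if the X-derivability-reduction-condition of a
standard disjunction γ ∨ (⋀_{i∈NI}⟨A_i⟩φ_i → ⋁_{j∈PI}⟨B_j⟩ψ_j) is met, then
the standard disjunction is derivable in XL. -/
theorem upward_derivability {Agent : Type} [Fintype Agent] (X : Set P3)
    (d : StdDisj Agent)
    (h : Deriv X d.γ ∨
      ((P3.D ∉ X → ∃ (N' : Finset (Fin d.n)) (j : Fin (d.m + 1)),
          d.Neat X N' ∧ (⋃ i ∈ N', d.A i) ⊆ d.B j ∧
          Deriv X ((bigConj (N'.toList.map d.φ)).imp (d.ψ j))) ∧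
        (P3.D ∈ X → ∃ (N' : Finset (Fin d.n)) (j : Fin (d.m + 1)),
          d.Neat X N' ∧ (⋃ i ∈ N', d.A i) ⊆ d.B j ∧
          Deriv X ((bigConj (N'.toList.map d.φ)).imp
            ((d.ψ j).or (bigDisj (d.PI0.toList.map d.ψ))))))) :
    Deriv X d.toFormula := by
  exact upward_derivability_general X d.γ d.A d.φ d.B d.ψ d.PI0 (by simp [StdDisj.PI0])
    (by simpa only [d.neat_iff] using h)

end CL
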